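/- Let G = (V,E,ω) be a weighted digraph with structural set S such that every vertex of G belongs to a branch of B_S(G), and let X_S(G) be an isospectral expansion of G with respect to S. Then (a) G and X_S(G) have the same set of edge weights, i.e. {ω(e) : e an edge of G} = {μ(e) : e an edge of X_S(G)} as sets; and (b) det(M(X_S(G)) − λI) = det(M(G) − λI) · ∏_{v_i ∈ V−S} (ω(e_{ii}) − λ)^{n_i − 1}, where n_i is the number of branches in B_S(G) containing v_i. -/

import Mathlib

/-!
Part (a): since the branches cover all vertices and the graph outside `S` has no cycles except
loops, every edge can be completed to a branch (`exists_branch_of_edge`).  Hence the nonzero edge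
weights are exactly the nonzero entries of the sequences `Ω(β)`, and these agree for the two graphs.

Part (b): for a structural set `S`, Gaussian elimination of the block `(Sᶜ, S)` gives
`det (A - λ) = det (R - λ) * ∏_{i ∉ S} (A_ii - λ)` (`charRat_eq`), where `R` is the isospectral
reduction, whose entries are sums of branch products.  The elimination rests on the first-step
recursion for sums over paths (`pathSum_rec`); the block outside `S` has a product determinant
because some rank function decreases along its edges (`exists_rank`, `det_outside`).  Branch
products depend only on `Ω(β)`, so both graphs have the same `R`.  Finally the product over all
branches of the factors `A_vv - λ` of their interior vertices also depends only on the `Ω(β)`; by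
double counting it equals `∏ (A_ii - λ)^{n_i}` (`prod_branch_loops`), and in the expansion every
vertex outside `S` has `n_i = 1`.
-/

open scoped BigOperators

abbrev Wl : Type := RatFunc ℂ

def IsCycle {n : ℕ} (A : Matrix (Fin n) (Fin n) Wl) (l : List (Fin n)) : Prop :=
  l ≠ [] ∧ l.Nodup ∧ l.Chain' (fun u v => A u v ≠ 0) ∧
    ∀ u v : Fin n, l.head? = some u → l.getLast? = some v → A v u ≠ 0

def IsStructuralSet {n : ℕ} (A : Matrix (Fin n) (Fin n) Wl) (S : Finset (Fin n)) : Prop :=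
  S.Nonempty ∧ (∀ l, IsCycle A l → 2 ≤ l.length → ∃ v ∈ l, v ∈ S) ∧
    ∀ i, i ∉ S → A i i ≠ RatFunc.X

def IsBranch {n : ℕ} (A : Matrix (Fin n) (Fin n) Wl) (S : Finset (Fin n)) (i j : Fin n)
    (l : List (Fin n)) : Prop :=
  2 ≤ l.length ∧ l.head? = some i ∧ l.getLast? = some j ∧ i ∈ S ∧ j ∈ S ∧
    l.Chain' (fun u v => A u v ≠ 0) ∧ (∀ v ∈ l.tail.dropLast, v ∉ S) ∧
    l.dropLast.Nodup ∧ l.tail.Nodup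

noncomputable def innerProd {n : ℕ} (A : Matrix (Fin n) (Fin n) Wl) : List (Fin n) → Wl
  | u :: v :: rest => A u v / (RatFunc.X - A u u) * innerProd A (v :: rest)
  | _ => 1

noncomputable def branchProd {n : ℕ} (A : Matrix (Fin n) (Fin n) Wl) : List (Fin n) → Wl
  | u :: v :: rest => A u v * innerProd A (v :: rest)
  | _ => 0

noncomputable def reduce {n : ℕ} (A : Matrix (Fin n) (Fin n) Wl) (S : Finset (Fin n)) :
    Matrix (Fin n) (Fin n) Wl :=
  Matrix.of fun i j => ∑ᶠ l ∈ {l : List (Fin n) | IsBranch A S i j l}, branchProd A l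

noncomputable def charRat {V : Type} [Fintype V] [DecidableEq V] (A : Matrix V V Wl) : Wl :=
  (A - Matrix.diagonal (fun _ => (RatFunc.X : Wl))).det

noncomputable def spec {V : Type} [Fintype V] [DecidableEq V] (A : Matrix V V Wl) : Multiset ℂ :=
  (charRat A).num.roots - (charRat A).denom.roots

noncomputable def ispec {V : Type} [Fintype V] [DecidableEq V] (A : Matrix V V Wl) : Multiset ℂ :=
  (charRat A).denom.roots - (charRat A).num.roots

noncomputable def reduceSub {n : ℕ} (A : Matrix (Fin n) (Fin n) Wl) (S : Finset (Fin n)) :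
    Matrix {i // i ∈ S} {i // i ∈ S} Wl :=
  (reduce A S).submatrix Subtype.val Subtype.val

def restrictC {n : ℕ} (A : Matrix (Fin n) (Fin n) Wl) (S : Finset (Fin n)) :
    Matrix {i // i ∈ Sᶜ} {i // i ∈ Sᶜ} Wl :=
  A.submatrix Subtype.val Subtype.val

/-- `Ω_G(β)`: the ordered sequence of edge weights of a branch interleaved with the
loop weights of its interior vertices. -/
def weightSeq {n : ℕ} (A : Matrix (Fin n) (Fin n) Wl) : List (Fin n) → List Wl
  | u :: v :: w :: rest => A u v :: A v v :: weightSeq A (v :: w :: rest)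
  | [u, v] => [A u v]
  | [u] => [A u u]
  | [] => []

/-- `l` is a branch of `G` with respect to `S` (between some pair of vertices of `S`). -/
def IsBranchOf {n : ℕ} (A : Matrix (Fin n) (Fin n) Wl) (S : Finset (Fin n))
    (l : List (Fin n)) : Prop :=
  ∃ i j, IsBranch A S i j l

/-! ### Paths, branches and sums over them -/

/-- A grading that strictly decreases along every non-loop edge outside `S`: it is the maximal
length of a path starting at the given vertex and avoiding `S`.  Existence is exactly the
statement that `S` meets all cycles of length at least two. -/
theorem exists_rank {n : ℕ} {A : Matrix (Fin n) (Fin n) Wl} {S : Finset (Fin n)}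
    (h : IsStructuralSet A S) :
    ∃ r : Fin n → ℕ, ∀ u v, u ∉ S → v ∉ S → u ≠ v → A u v ≠ 0 → r v < r u := by
  classical
  let T : Fin n → Set (List (Fin n)) := fun u =>
    {l | l.head? = some u ∧ l.Nodup ∧ l.IsChain (fun a b => A a b ≠ 0) ∧ ∀ x ∈ l, x ∉ S}
  have hbdd : ∀ u, BddAbove (List.length '' T u) := by
    intro u
    refine ⟨n, ?_⟩
    rintro _ ⟨l, hl, rfl⟩
    simpa using hl.2.1.length_le_card
  refine ⟨fun u => sSup (List.length '' T u), ?_⟩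
  intro u v hu hv huv hA
  have hne : (List.length '' T v).Nonempty := ⟨1, [v], by simp [T, hv], rfl⟩
  obtain ⟨l, ⟨hhead, hnd, hch, hS⟩, hlen⟩ := Nat.sSup_mem hne (hbdd v)
  change sSup (List.length '' T v) < sSup (List.length '' T u)
  rw [← hlen]
  obtain _ | ⟨v', l'⟩ := l
  · simp at hhead
  obtain rfl : v' = v := by simpa using hhead
  have hmem : u ∉ (v' :: l') := by
    -- if the path from `v` passes through `u`, it closes up to a cycle avoiding `S`
    intro hmem
    obtain ⟨p, q, hpq⟩ := List.append_of_mem hmem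
    obtain _ | ⟨a, p⟩ := p
    · simp only [List.nil_append, List.cons.injEq] at hpq
      exact huv hpq.1.symm
    obtain ⟨rfl, rfl⟩ : v' = a ∧ l' = p ++ u :: q := by simpa using hpq
    have hcyc : IsCycle A ((v' :: p) ++ [u]) := by
      have e : v' :: (p ++ u :: q) = ((v' :: p) ++ [u]) ++ q := by simp
      rw [e] at hnd hch
      refine ⟨by simp, hnd.of_append_left, hch.left_of_append, ?_⟩
      intro a b ha hb
      simp only [List.cons_append, List.head?_cons, Option.some.injEq] at ha
      rw [List.getLast?_append] at hb
      simp only [List.getLast?_singleton, Option.some_or, Option.some.injEq] at hb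
      subst ha hb
      exact hA
    obtain ⟨x, hx, hxS⟩ := h.2.1 _ hcyc (by simp)
    refine hS x ?_ hxS
    simp only [List.cons_append, List.mem_cons, List.mem_append, List.not_mem_nil, or_false] at hx ⊢
    tauto
  refine Nat.lt_of_lt_of_le (Nat.lt_succ_self _)
    (le_csSup (hbdd u) ⟨u :: v' :: l', ⟨by simp, ?_, ?_, ?_⟩, rfl⟩)
  · exact List.nodup_cons.2 ⟨hmem, hnd⟩
  · exact List.isChain_cons_cons.2 ⟨hA, hch⟩
  · intro x hx
    rcases List.mem_cons.1 hx with rfl | hx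
    · exact hu
    · exact hS x hx

/-- `PathTo A S j l`: the list `l` is a walk of at least one edge ending at `j`, whose interior
vertices lie outside `S` and which never uses the loop of an interior vertex.  The starting
vertex is unrestricted.  For a structural set `S` such walks automatically have distinct interior
vertices, so with both ends in `S` this is the notion of a branch, in a form suited to induction. -/
def PathTo {n : ℕ} (A : Matrix (Fin n) (Fin n) Wl) (S : Finset (Fin n)) (j : Fin n) :
    List (Fin n) → Prop
  | u :: v :: w :: rest => v ∉ S ∧ v ≠ u ∧ A u v ≠ 0 ∧ PathTo A S j (v :: w :: rest)
  | [u, v] => v = j ∧ A u v ≠ 0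
  | [_] => False
  | [] => False

section Paths

variable {n : ℕ} {A : Matrix (Fin n) (Fin n) Wl} {S : Finset (Fin n)} {j : Fin n}

theorem PathTo.of_list : ∀ l : List (Fin n), 2 ≤ l.length → l.getLast? = some j →
    l.IsChain (fun u v => A u v ≠ 0) → (∀ v ∈ l.tail.dropLast, v ∉ S) → l.dropLast.Nodup →
    PathTo A S j l
  | [], h, _, _, _, _ => by simp at h
  | [_], h, _, _, _, _ => by simp at h
  | [u, v], _, h, hc, _, _ => by
      simp only [List.isChain_cons_cons] at hc
      exact ⟨by simpa using h, hc.1⟩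
  | u :: v :: w :: rest, _, h, hc, hS, hn => by
      rw [List.isChain_cons_cons] at hc
      simp only [List.tail_cons, List.dropLast_cons_cons, List.mem_cons, forall_eq_or_imp] at hS
      simp only [List.dropLast_cons_cons, List.nodup_cons, List.mem_cons, not_or] at hn
      refine ⟨hS.1, fun e => hn.1.1 e.symm, hc.1,
        PathTo.of_list (v :: w :: rest) (by simp) (by simpa using h) hc.2 ?_ ?_⟩
      · simpa using hS.2
      · simpa using hn.2

theorem PathTo.to_list : ∀ l : List (Fin n), PathTo A S j l → 2 ≤ l.length ∧
    l.getLast? = some j ∧ l.IsChain (fun u v => A u v ≠ 0) ∧ (∀ v ∈ l.tail.dropLast, v ∉ S)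
  | [], h => h.elim
  | [_], h => h.elim
  | [u, v], h => by
      obtain ⟨rfl, h⟩ := h
      simp [h]
  | u :: v :: w :: rest, h => by
      obtain ⟨h1, h2, h3, h4⟩ := h
      obtain ⟨_, i2, i3, i4⟩ := PathTo.to_list _ h4
      refine ⟨by simp, by simpa using i2, List.isChain_cons_cons.2 ⟨h3, i3⟩, ?_⟩
      simp only [List.tail_cons, List.dropLast_cons_cons, List.mem_cons, forall_eq_or_imp]
      exact ⟨h1, by simpa using i4⟩

/-- Along the interior of a path, any rank function as in `exists_rank` strictly decreases. -/
theorem PathTo.interior_chain {r : Fin n → ℕ}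
    (hr : ∀ u v, u ∉ S → v ∉ S → u ≠ v → A u v ≠ 0 → r v < r u) :
    ∀ l : List (Fin n), PathTo A S j l → l.tail.dropLast.IsChain (fun u v => r v < r u)
  | [], h => h.elim
  | [_], h => h.elim
  | [u, v], h => by simp
  | [u, v, w], h => by simp
  | u :: v :: w :: x :: rest, h => by
      obtain ⟨h1, h2, h3, h4⟩ := h
      have i := PathTo.interior_chain hr _ h4
      obtain ⟨k1, k2, k3, _⟩ := h4
      simp only [List.tail_cons, List.dropLast_cons_cons, List.isChain_cons_cons] at i ⊢
      exact ⟨hr _ _ h1 k1 k2.symm k3, i⟩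

theorem PathTo.interior_nodup (h : IsStructuralSet A S) {l : List (Fin n)} (hl : PathTo A S j l) :
    l.tail.dropLast.Nodup := by
  obtain ⟨r, hr⟩ := exists_rank h
  have := PathTo.interior_chain hr l hl
  have : Trans (fun u v => r v < r u) (fun u v => r v < r u) (fun u v => r v < r u) :=
    ⟨fun h1 h2 => lt_trans h2 h1⟩
  have hp := List.IsChain.pairwise ‹_›
  exact hp.imp (fun h e => by subst e; exact lt_irrefl _ h)

theorem isBranch_iff (h : IsStructuralSet A S) {i : Fin n} {l : List (Fin n)} :
    IsBranch A S i j l ↔ i ∈ S ∧ j ∈ S ∧ l.head? = some i ∧ PathTo A S j l := by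
  constructor
  · rintro ⟨h1, h2, h3, h4, h5, h6, h7, h8, h9⟩
    exact ⟨h4, h5, h2, PathTo.of_list l h1 h3 h6 h7 h8⟩
  · rintro ⟨hi, hj, hh, hp⟩
    obtain ⟨h1, h2, h3, h4⟩ := hp.to_list
    have hn := hp.interior_nodup h
    refine ⟨h1, hh, h2, hi, hj, h3, h4, ?_, ?_⟩
    · obtain _ | ⟨u, _ | ⟨v, l⟩⟩ := l
      · simp
      · simp
      · obtain rfl : u = i := by simpa using hh
        rw [List.dropLast_cons_cons, List.nodup_cons]
        exact ⟨fun hm => h4 u hm hi, hn⟩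
    · obtain _ | ⟨u, _ | ⟨v, l⟩⟩ := l
      · simp
      · simp
      · have hne : (v :: l) ≠ [] := by simp
        have hlast : (v :: l).getLast hne = j := by
          rw [List.getLast?_cons_cons, List.getLast?_eq_some_getLast hne] at h2
          exact Option.some.inj h2
        have e : (v :: l) = (v :: l).dropLast ++ [j] := by
          rw [← hlast, List.dropLast_append_getLast]
        simp only [List.tail_cons] at h4 hn ⊢
        rw [e, List.nodup_append]
        refine ⟨hn, by simp, ?_⟩
        rintro a ha b hb rfl
        obtain rfl : a = j := by simpa using hb
        exact h4 a ha hj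

theorem finite_paths (h : IsStructuralSet A S) (u j : Fin n) :
    {l | l.head? = some u ∧ PathTo A S j l}.Finite := by
  refine (List.finite_length_le (Fin n) (n + 2)).subset ?_
  rintro l ⟨-, hl⟩
  have := (hl.interior_nodup h).length_le_card
  simp only [List.length_dropLast, List.length_tail, Fintype.card_fin] at this
  simp only [Set.mem_ofPred_eq]
  omega

theorem finite_branch (h : IsStructuralSet A S) (i j : Fin n) :
    Finite {l // IsBranch A S i j l} :=
  ((finite_paths h i j).subset fun _ hl => ((isBranch_iff h).1 hl).2.2).to_subtype

theorem finite_branchOf (h : IsStructuralSet A S) : {l | IsBranchOf A S l}.Finite := by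
  have : {l | IsBranchOf A S l} ⊆ ⋃ i, ⋃ j, {l | l.head? = some i ∧ PathTo A S j l} := by
    rintro l ⟨i, j, hl⟩
    simp only [Set.mem_iUnion]
    exact ⟨i, j, ((isBranch_iff h).1 hl).2.2⟩
  exact (Set.finite_iUnion fun i => Set.finite_iUnion fun j => finite_paths h i j).subset this

/-- The sum of the branch products of all paths from `u` (not necessarily in `S`) to `j`.  For
`u, j ∈ S` it is the `(u, j)` entry of the isospectral reduction. -/
noncomputable def pathSum (A : Matrix (Fin n) (Fin n) Wl) (S : Finset (Fin n)) (u j : Fin n) : Wl :=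
  ∑ᶠ l ∈ {l : List (Fin n) | l.head? = some u ∧ PathTo A S j l}, branchProd A l

theorem branchProd_cons (u v w : Fin n) (rest : List (Fin n)) :
    branchProd A (u :: v :: w :: rest) =
      A u v / (RatFunc.X - A v v) * branchProd A (v :: w :: rest) := by
  simp only [branchProd, innerProd]
  ring

/-- First-step decomposition of the sum over paths. -/
theorem pathSum_rec (h : IsStructuralSet A S) (u j : Fin n) :
    pathSum A S u j = A u j +
      ∑ v ∈ Sᶜ.erase u, A u v / (RatFunc.X - A v v) * pathSum A S v j := by
  classical
  let P : Fin n → Finset (List (Fin n)) := fun u => (finite_paths h u j).toFinset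
  have hP : ∀ u, pathSum A S u j = ∑ l ∈ P u, branchProd A l := by
    intro u
    exact finsum_mem_eq_finite_toFinset_sum _ (finite_paths h u j)
  have memP : ∀ u l, l ∈ P u ↔ l.head? = some u ∧ PathTo A S j l := by
    intro u l
    simp [P]
  have hdec : P u = (if A u j ≠ 0 then {[u, j]} else ∅) ∪
      ((Sᶜ.erase u).filter fun v => A u v ≠ 0).biUnion fun v => (P v).image (List.cons u) := by
    ext l
    simp only [Finset.mem_union, Finset.mem_biUnion, Finset.mem_filter, Finset.mem_erase,
      Finset.mem_compl, Finset.mem_image, memP]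
    constructor
    · rintro ⟨hh, hl⟩
      obtain _ | ⟨a, _ | ⟨v, _ | ⟨w, l⟩⟩⟩ := l
      · exact hl.elim
      · exact hl.elim
      · obtain rfl : a = u := by simpa using hh
        obtain ⟨rfl, hA⟩ := hl
        left
        simp [hA]
      · obtain rfl : a = u := by simpa using hh
        obtain ⟨h1, h2, h3, h4⟩ := hl
        right
        exact ⟨v, ⟨⟨h2, h1⟩, h3⟩, v :: w :: l, ⟨by simp, h4⟩, rfl⟩
    · rintro (hl | ⟨v, ⟨⟨h2, h1⟩, h3⟩, l, ⟨hh, h4⟩, rfl⟩)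
      · split_ifs at hl with hA
        · obtain rfl : l = [u, j] := by simpa using hl
          exact ⟨by simp, rfl, hA⟩
        · simp at hl
      · refine ⟨by simp, ?_⟩
        obtain _ | ⟨a, _ | ⟨w, l⟩⟩ := l
        · exact h4.elim
        · exact h4.elim
        · obtain rfl : a = v := by simpa using hh
          exact ⟨h1, h2, h3, h4⟩
  rw [hP, hdec, Finset.sum_union, Finset.sum_biUnion]
  · congr 1
    · split_ifs with hA
      · simp [branchProd, innerProd]
      · simpa using (not_not.1 hA).symm
    · rw [Finset.sum_filter]
      refine Finset.sum_congr rfl fun v hv => ?_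
      split_ifs with hA
      · rw [Finset.sum_image (fun a _ b _ hab => (List.cons.inj hab).2), hP, Finset.mul_sum]
        refine Finset.sum_congr rfl fun l hl => ?_
        obtain ⟨hh, hl⟩ := (memP _ _).1 hl
        obtain _ | ⟨a, _ | ⟨w, l⟩⟩ := l
        · exact hl.elim
        · exact hl.elim
        · obtain rfl : a = v := by simpa using hh
          exact branchProd_cons _ _ _ _
      · simp [not_not.1 hA]
  · intro v _ w _ hvw
    rw [Function.onFun, Finset.disjoint_left]
    intro l hl hl'
    obtain ⟨a, ha, rfl⟩ := Finset.mem_image.1 hl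
    obtain ⟨b, hb, hab⟩ := Finset.mem_image.1 hl'
    obtain rfl := (List.cons.inj hab).2
    have h1 := ((memP _ _).1 ha).1
    have h2 := ((memP _ _).1 hb).1
    rw [h1] at h2
    exact hvw (Option.some.inj h2)
  · rw [Finset.disjoint_left]
    intro l hl hl'
    obtain ⟨v, -, hl'⟩ := Finset.mem_biUnion.1 hl'
    obtain ⟨a, ha, rfl⟩ := Finset.mem_image.1 hl'
    have ha := ((memP _ _).1 ha).2
    split_ifs at hl with hA
    · obtain rfl : a = [j] := by simpa using hl
      exact ha
    · simp at hl

theorem pathSum_eq_sum_branch (h : IsStructuralSet A S) {i : Fin n} (hi : i ∈ S) (hj : j ∈ S)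
    [Fintype {l // IsBranch A S i j l}] :
    pathSum A S i j = ∑ β : {l // IsBranch A S i j l}, branchProd A β.1 := by
  have e : {l : List (Fin n) | l.head? = some i ∧ PathTo A S j l} = {l | IsBranch A S i j l} := by
    ext l
    simp [isBranch_iff h, hi, hj]
  have hfin : {l | IsBranch A S i j l}.Finite := e ▸ finite_paths h i j
  rw [pathSum, e, finsum_mem_eq_finite_toFinset_sum _ hfin]
  exact Finset.sum_subtype _ (by simp) _

end Paths

/-! ### The Schur complement -/

section Determinant

variable {n : ℕ} {A : Matrix (Fin n) (Fin n) Wl} {S : Finset (Fin n)}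

/-- Outside a structural set only the identity permutation contributes to the determinant. -/
theorem det_outside (h : IsStructuralSet A S) :
    ((A - Matrix.diagonal fun _ => (RatFunc.X : Wl)).toSquareBlockProp fun i => i ∉ S).det =
      ∏ i ∈ Sᶜ, (A i i - RatFunc.X) := by
  classical
  obtain ⟨r, hr⟩ := exists_rank h
  rw [Matrix.det_apply', Finset.sum_eq_single 1]
  · rw [Finset.prod_subtype (p := fun i => i ∉ S) (F := inferInstance) Sᶜ (by simp)]
    simp [Matrix.toSquareBlockProp]
  · intro σ _ hσ
    refine mul_eq_zero_of_right _ ?_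
    by_contra hne
    replace hne := Finset.prod_ne_zero_iff.1 hne
    have hlt : ∀ i, σ i ≠ i → r i.1 < r (σ i).1 := by
      intro i hi
      have hval : (σ i).1 ≠ i.1 := fun e => hi (Subtype.ext e)
      have : (A - Matrix.diagonal fun _ => (RatFunc.X : Wl) : Matrix (Fin n) (Fin n) Wl)
          (σ i).1 i.1 ≠ 0 :=
        hne i (Finset.mem_univ _)
      simp only [Matrix.sub_apply,
        Matrix.diagonal_apply_ne _ hval, sub_zero] at this
      exact hr _ _ (σ i).2 i.2 hval this
    obtain ⟨i, hi⟩ : ∃ i, σ i ≠ i := by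
      by_contra! hall
      exact hσ (Equiv.ext hall)
    -- the total rank is invariant under a permutation, but would strictly increase
    have hsum : ∑ i : {i // i ∉ S}, r i.1 < ∑ i, r (σ i).1 := by
      refine Finset.sum_lt_sum (fun k _ => ?_) ⟨i, Finset.mem_univ _, hlt i hi⟩
      by_cases hk : σ k = k
      · rw [hk]
      · exact (hlt k hk).le
    rw [Equiv.sum_comp σ (fun i => r i.1)] at hsum
    exact lt_irrefl _ hsum
  · simp

/-- The Schur-complement identity: `det (A - λ)` is the characteristic determinant of the
isospectral reduction times the product of the diagonal entries outside `S`. -/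
theorem charRat_eq (h : IsStructuralSet A S) :
    charRat A = charRat (Matrix.of fun i j : {i // i ∈ S} => pathSum A S i j) *
      ∏ i ∈ Sᶜ, (A i i - RatFunc.X) := by
  classical
  have hd : ∀ i, i ∉ S → (RatFunc.X : Wl) - A i i ≠ 0 := fun i hi =>
    sub_ne_zero.2 (h.2.2 i hi).symm
  set M : Matrix (Fin n) (Fin n) Wl := A - Matrix.diagonal fun _ => (RatFunc.X : Wl) with hM
  -- the unipotent column operation eliminating the block `(Sᶜ, S)`
  let U : Matrix (Fin n) (Fin n) Wl := Matrix.of fun k j =>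
    if k ∉ S ∧ j ∈ S then pathSum A S k j / (RatFunc.X - A k k) else if k = j then 1 else 0
  have hU : U.det = 1 := by
    rw [Matrix.twoBlockTriangular_det' U (fun i => i ∈ S)]
    · have e1 : U.toSquareBlockProp (fun i => i ∈ S) = 1 := by
        ext ⟨i, hi⟩ ⟨j, hj⟩
        simp [U, Matrix.toSquareBlockProp, hi, Matrix.one_apply]
      have e2 : U.toSquareBlockProp (fun i => i ∉ S) = 1 := by
        ext ⟨i, hi⟩ ⟨j, hj⟩
        simp [U, Matrix.toSquareBlockProp, hj, Matrix.one_apply]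
      rw [e1, e2]
      simp
    · intro i hi j hj
      have : i ≠ j := fun e => hj (e ▸ hi)
      simp [U, hj, this]
  have hcol : ∀ i j, j ∈ S → (M * U) i j =
      M i j + ∑ k ∈ Sᶜ, M i k * (pathSum A S k j / (RatFunc.X - A k k)) := by
    intro i j hj
    rw [Matrix.mul_apply, ← Finset.sum_add_sum_compl S]
    congr 1
    · rw [Finset.sum_eq_single_of_mem j hj]
      · simp [U, hj]
      · intro k hk hkj
        simp [U, hk, hkj]
    · refine Finset.sum_congr rfl fun k hk => ?_
      have hk : k ∉ S := by simpa using hk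
      simp [U, hk, hj]
  have hout : ∀ i j, j ∉ S → (M * U) i j = M i j := by
    intro i j hj
    rw [Matrix.mul_apply, Finset.sum_eq_single j]
    · simp [U, hj]
    · intro k _ hkj
      simp [U, hj, hkj]
    · simp
  have hoff : ∀ i k, i ≠ k → M i k = A i k := by
    intro i k hik
    simp [hM, Matrix.diagonal_apply_ne _ hik]
  have hrec : ∀ i j, ∑ k ∈ Sᶜ.erase i, M i k * (pathSum A S k j / (RatFunc.X - A k k)) =
      pathSum A S i j - A i j := by
    intro i j
    rw [pathSum_rec h i j, add_sub_cancel_left]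
    refine Finset.sum_congr rfl fun k hk => ?_
    rw [hoff i k (Finset.ne_of_mem_erase hk).symm]
    ring
  have hin : ∀ i j, i ∈ S → j ∈ S →
      (M * U) i j = pathSum A S i j - Matrix.diagonal (fun _ => (RatFunc.X : Wl)) i j := by
    intro i j hi hj
    have he : Sᶜ.erase i = Sᶜ := Finset.erase_eq_of_notMem (by simpa using hi)
    have := hrec i j
    rw [he] at this
    rw [hcol i j hj, this, hM, Matrix.sub_apply]
    ring
  have hzero : ∀ i, i ∉ S → ∀ j, j ∈ S → (M * U) i j = 0 := by
    intro i hi j hj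
    have hij : i ≠ j := fun e => hi (e ▸ hj)
    have hii : M i i = A i i - RatFunc.X := by simp [hM]
    rw [hcol i j hj, ← Finset.add_sum_erase _ _ (Finset.mem_compl.2 hi), hrec, hoff i j hij, hii]
    have hcancel : (A i i - RatFunc.X) * (pathSum A S i j / (RatFunc.X - A i i)) =
        -pathSum A S i j := by
      rw [← neg_sub, neg_mul, mul_div_cancel₀ _ (hd i hi)]
    rw [hcancel]
    abel
  have hdet : charRat A = (M * U).det := by
    rw [Matrix.det_mul, hU, mul_one, charRat]
  have e1 : (M * U).toSquareBlockProp (fun i => i ∈ S) =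
      (Matrix.of fun i j : {i // i ∈ S} => pathSum A S i j) -
        Matrix.diagonal fun _ => (RatFunc.X : Wl) := by
    ext ⟨i, hi⟩ ⟨j, hj⟩
    have := hin i j hi hj
    simpa [Matrix.toSquareBlockProp, Matrix.diagonal_apply] using this
  have e2 : (M * U).toSquareBlockProp (fun i => i ∉ S) = M.toSquareBlockProp (fun i => i ∉ S) := by
    ext ⟨i, hi⟩ ⟨j, hj⟩
    exact hout i j hj
  rw [hdet, Matrix.twoBlockTriangular_det (M * U) (fun i => i ∈ S) hzero, e1, e2, hM,
    det_outside h, charRat]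
  -- the two sides differ only in the enumeration of the subtype `S`
  congr!

end Determinant

/-! ### Weight sequences and edge weights -/

/-- The branch product, read off from the sequence `Ω(β)`. -/
noncomputable def seqProd : List Wl → Wl
  | a :: b :: rest => a / (RatFunc.X - b) * seqProd rest
  | [a] => a
  | [] => 1

/-- The product of `ω(e_vv) - λ` over the interior vertices, read off from `Ω(β)`. -/
noncomputable def seqLoops : List Wl → Wl
  | _ :: b :: rest => (b - RatFunc.X) * seqLoops rest
  | _ => 1

section Weights

variable {n : ℕ} {A : Matrix (Fin n) (Fin n) Wl} {S : Finset (Fin n)}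

theorem branchProd_eq_seqProd : ∀ l : List (Fin n), 2 ≤ l.length →
    branchProd A l = seqProd (weightSeq A l)
  | [], h => by simp at h
  | [_], h => by simp at h
  | [u, v], _ => by simp [branchProd, innerProd, weightSeq, seqProd]
  | u :: v :: w :: rest, _ => by
      rw [branchProd_cons, branchProd_eq_seqProd (v :: w :: rest) (by simp)]
      simp only [weightSeq, seqProd]

theorem prod_interior_eq_seqLoops : ∀ l : List (Fin n), 2 ≤ l.length →
    (l.tail.dropLast.map fun v => A v v - RatFunc.X).prod = seqLoops (weightSeq A l)
  | [], h => by simp at h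
  | [_], h => by simp at h
  | [u, v], _ => by simp [weightSeq, seqLoops]
  | u :: v :: w :: rest, _ => by
      have ih := prod_interior_eq_seqLoops (v :: w :: rest) (by simp)
      simp only [List.tail_cons] at ih
      simp only [weightSeq, seqLoops, List.tail_cons, List.dropLast_cons_cons, List.map_cons,
        List.prod_cons, ih]

theorem IsBranch.mem_interior {i j : Fin n} {l : List (Fin n)} (hl : IsBranch A S i j l)
    {v : Fin n} (hv : v ∉ S) : v ∈ l.tail.dropLast ↔ v ∈ l := by
  constructor
  · intro h
    exact List.mem_of_mem_tail (List.mem_of_mem_dropLast h)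
  · intro h
    obtain ⟨_, h1, h2, hi, hj, -⟩ := hl
    obtain _ | ⟨u, l⟩ := l
    · simp at h
    obtain rfl : u = i := by simpa using h1
    rcases List.mem_cons.1 h with rfl | h
    · exact (hv hi).elim
    have hne : l ≠ [] := List.ne_nil_of_mem h
    have hlast : l.getLast hne = j := by
      obtain _ | ⟨w, l⟩ := l
      · exact (hne rfl).elim
      rw [List.getLast?_cons_cons, List.getLast?_eq_some_getLast hne] at h2
      exact Option.some.inj h2
    rw [← List.dropLast_append_getLast hne, hlast, List.mem_append] at h
    rcases h with h | h
    · exact h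
    · obtain rfl : v = j := by simpa using h
      exact (hv hj).elim

/-- Double counting of the pairs (branch, interior vertex on it). -/
theorem prod_branch_loops (h : IsStructuralSet A S) [Fintype {l // IsBranchOf A S l}] :
    ∏ β : {l // IsBranchOf A S l}, seqLoops (weightSeq A β.1) =
      ∏ i ∈ Sᶜ, (A i i - RatFunc.X) ^ Set.ncard {l | IsBranchOf A S l ∧ i ∈ l} := by
  classical
  have key : ∀ β : {l // IsBranchOf A S l}, seqLoops (weightSeq A β.1) =
      ∏ i ∈ Sᶜ, if i ∈ β.1 then (A i i - RatFunc.X) else 1 := by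
    rintro ⟨l, i, j, hl⟩
    have hp := ((isBranch_iff h).1 hl).2.2.2
    rw [← prod_interior_eq_seqLoops l hl.1, ← List.prod_toFinset _ (hp.interior_nodup h),
      ← Finset.prod_filter]
    refine Finset.prod_congr ?_ fun _ _ => rfl
    ext v
    simp only [List.mem_toFinset, Finset.mem_filter, Finset.mem_compl]
    constructor
    · intro hv
      have hvS := hp.to_list.2.2.2 v hv
      exact ⟨hvS, (hl.mem_interior hvS).1 hv⟩
    · rintro ⟨hvS, hv⟩
      exact (hl.mem_interior hvS).2 hv
  rw [Finset.prod_congr rfl fun β _ => key β, Finset.prod_comm]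
  refine Finset.prod_congr rfl fun i _ => ?_
  rw [← Finset.prod_filter, Finset.prod_const]
  congr 1
  have e : {l | IsBranchOf A S l ∧ i ∈ l} =
      Subtype.val '' {β : {l // IsBranchOf A S l} | i ∈ β.1} := by
    ext l
    simp [and_comm]
  rw [e, Set.ncard_image_of_injective _ Subtype.val_injective, ← Set.ncard_coe_finset]
  congr 1
  ext β
  simp

theorem entry_of_mem_weightSeq : ∀ (l : List (Fin n)) (w : Wl), w ∈ weightSeq A l →
    ∃ i j, A i j = w
  | [], w, h => by simp [weightSeq] at h
  | [u], w, h => ⟨u, u, by simpa [weightSeq, eq_comm] using h⟩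
  | [u, v], w, h => ⟨u, v, by simpa [weightSeq, eq_comm] using h⟩
  | u :: v :: x :: rest, w, h => by
      simp only [weightSeq, List.mem_cons] at h
      rcases h with h | h | h
      · exact ⟨u, v, h.symm⟩
      · exact ⟨v, v, h.symm⟩
      · exact entry_of_mem_weightSeq (v :: x :: rest) w (by simpa [weightSeq] using h)

/-- A path cut at a vertex `v` other than its end can be continued by another path starting at `v`.
Unless `v` is the initial vertex, its loop weight is recorded on the original path. -/
theorem PathTo.glue {j j' v : Fin n} (hv : v ≠ j) {q q' : List (Fin n)}
    (hq : PathTo A S j' (v :: q')) :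
    ∀ p : List (Fin n), PathTo A S j (p ++ v :: q) →
      PathTo A S j' (p ++ v :: q') ∧
        (p = [] ∨ A v v ∈ weightSeq A (p ++ v :: q)) ∧
        ∀ w ∈ weightSeq A (v :: q'), w ∈ weightSeq A (p ++ v :: q')
  | [], h => ⟨hq, Or.inl rfl, fun _ hw => hw⟩
  | [a], h => by
      obtain _ | ⟨b, q⟩ := q
      · exact (hv h.1).elim
      obtain _ | ⟨b', q'⟩ := q'
      · exact hq.elim
      refine ⟨⟨h.1, h.2.1, h.2.2.1, hq⟩, Or.inr (by simp [weightSeq]), ?_⟩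
      intro w hw
      simp only [List.cons_append, List.nil_append, weightSeq, List.mem_cons]
      exact Or.inr (Or.inr hw)
  | a :: b :: p, h => by
      have hsplit : ∀ s : List (Fin n), ∃ c t, p ++ v :: s = c :: t := by
        intro s
        exact List.exists_cons_of_ne_nil (by simp)
      obtain ⟨c, t, hc⟩ := hsplit q
      obtain ⟨c', t', hc'⟩ := hsplit q'
      simp only [List.cons_append, hc] at h
      obtain ⟨h1, h2, h3, h4⟩ := h
      obtain ⟨i2, i3, i4⟩ := PathTo.glue (q := q) hv hq (b :: p) (by simpa [hc] using h4)
      simp only [List.cons_append, hc, hc'] at i2 i3 i4 ⊢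
      refine ⟨⟨h1, h2, h3, i2⟩, Or.inr ?_, ?_⟩
      · simp only [weightSeq, List.mem_cons]
        exact Or.inr (Or.inr (i3.resolve_left (by simp)))
      · intro w hw
        simp only [weightSeq, List.mem_cons]
        exact Or.inr (Or.inr (i4 w hw))

theorem mem_weightSeq_first (u v : Fin n) (q : List (Fin n)) :
    A u v ∈ weightSeq A (u :: v :: q) := by
  obtain _ | ⟨w, q⟩ := q <;> simp [weightSeq]

/-- When the branches cover all vertices, every edge weight occurs on some branch. -/
theorem exists_branch_of_edge (h : IsStructuralSet A S)
    (hcov : ∀ v : Fin n, ∃ l, IsBranchOf A S l ∧ v ∈ l) {u v : Fin n} (hA : A u v ≠ 0) :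
    ∃ i j l, IsBranch A S i j l ∧ A u v ∈ weightSeq A l := by
  -- `u ∉ S` is interior to a branch, which is cut as `p ++ u :: q`
  have cut : ∀ u, u ∉ S → ∃ i j p q, i ∈ S ∧ j ∈ S ∧ u ≠ j ∧ p ≠ [] ∧
      (∀ s, (p ++ s).head? = some i) ∧ PathTo A S j (p ++ u :: q) := by
    intro u hu
    obtain ⟨l, ⟨i, j, hl⟩, hul⟩ := hcov u
    obtain ⟨hi, hj, hh, hp⟩ := (isBranch_iff h).1 hl
    obtain ⟨p, q, rfl⟩ := List.append_of_mem hul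
    obtain _ | ⟨a, p⟩ := p
    · obtain rfl : u = i := by simpa using hh
      exact (hu hi).elim
    · refine ⟨i, j, a :: p, q, hi, hj, fun e => hu (e ▸ hj), by simp, fun s => ?_, hp⟩
      simpa using hh
  -- a path starting at any vertex extends backwards to a branch
  have back : ∀ (u j : Fin n) (q : List (Fin n)), j ∈ S → PathTo A S j (u :: q) →
      ∃ i l, IsBranch A S i j l ∧ ∀ w ∈ weightSeq A (u :: q), w ∈ weightSeq A l := by
    intro u j q hj hq
    by_cases hu : u ∈ S
    · exact ⟨u, u :: q, (isBranch_iff h).2 ⟨hu, hj, by simp, hq⟩, fun _ hw => hw⟩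
    · obtain ⟨i, j', p, q', hi, hj', huj, -, hh, hp⟩ := cut u hu
      obtain ⟨h2, -, h4⟩ := PathTo.glue huj hq p hp
      exact ⟨i, p ++ u :: q, (isBranch_iff h).2 ⟨hi, hj, hh _, h2⟩, h4⟩
  by_cases hv : v ∈ S
  · obtain ⟨i, l, hl, hw⟩ := back u v [v] hv ⟨rfl, hA⟩
    exact ⟨i, v, l, hl, hw _ (mem_weightSeq_first _ _ _)⟩
  · obtain ⟨i, j, p, q, hi, hj, hvj, hp0, hh, hp⟩ := cut v hv
    have hq : PathTo A S j (v :: q) := by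
      clear hh hp0
      -- dropping an initial segment of a path before an interior vertex
      induction p with
      | nil => exact hp
      | cons a p ih =>
        apply ih
        obtain ⟨c, t, hc⟩ := List.exists_cons_of_ne_nil (l := p ++ v :: q) (by simp)
        rw [List.cons_append, hc] at hp
        rw [hc]
        obtain _ | ⟨d, t⟩ := t
        · obtain _ | ⟨e, p⟩ := p
          · obtain ⟨rfl, rfl⟩ : v = c ∧ q = [] := by simpa using hc
            exact (hvj hp.1).elim
          · simp at hc
        · exact hp.2.2.2
    by_cases huv : u = v
    · subst huv
      obtain ⟨-, h3, -⟩ := PathTo.glue hvj hq p hp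
      exact ⟨i, j, _, (isBranch_iff h).2 ⟨hi, hj, hh _, hp⟩, h3.resolve_left hp0⟩
    · obtain _ | ⟨w, q⟩ := q
      · exact hq.elim
      obtain ⟨i', l, hl, hw⟩ := back u j (v :: w :: q) hj ⟨hv, Ne.symm huv, hA, hq⟩
      exact ⟨i', j, l, hl, hw _ (mem_weightSeq_first _ _ _)⟩

theorem edge_weights_eq (h : IsStructuralSet A S)
    (hcov : ∀ v : Fin n, ∃ l, IsBranchOf A S l ∧ v ∈ l) :
    {w : Wl | w ≠ 0 ∧ ∃ i j, A i j = w} =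
      {w : Wl | w ≠ 0 ∧ ∃ (i j : {i // i ∈ S}) (β : {l // IsBranch A S i j l}),
        w ∈ weightSeq A β.1} := by
  ext w
  constructor
  · rintro ⟨hw, u, v, rfl⟩
    obtain ⟨i, j, l, hl, hm⟩ := exists_branch_of_edge h hcov hw
    have hl' := (isBranch_iff h).1 hl
    exact ⟨hw, ⟨i, hl'.1⟩, ⟨j, hl'.2.1⟩, ⟨l, hl⟩, hm⟩
  · rintro ⟨hw, i, j, β, hm⟩
    exact ⟨hw, entry_of_mem_weightSeq _ _ hm⟩

/-- Branches, sorted by their endpoints. -/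
noncomputable def sigmaBranchEquiv (A : Matrix (Fin n) (Fin n) Wl) (S : Finset (Fin n)) :
    (Σ p : {i // i ∈ S} × {i // i ∈ S}, {l // IsBranch A S p.1.1 p.2.1 l}) ≃
      {l // IsBranchOf A S l} :=
  Equiv.ofBijective (fun x => ⟨x.2.1, _, _, x.2.2⟩) (by
    constructor
    · rintro ⟨⟨⟨i, hi⟩, ⟨j, hj⟩⟩, ⟨l, hl⟩⟩ ⟨⟨⟨i', hi'⟩, ⟨j', hj'⟩⟩, ⟨l', hl'⟩⟩ e
      obtain rfl : l = l' := congrArg Subtype.val e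
      obtain rfl : i = i' := Option.some.inj (hl.2.1.symm.trans hl'.2.1)
      obtain rfl : j = j' := Option.some.inj (hl.2.2.1.symm.trans hl'.2.2.1)
      rfl
    · rintro ⟨l, i, j, hl⟩
      exact ⟨⟨⟨⟨i, hl.2.2.2.1⟩, ⟨j, hl.2.2.2.2.1⟩⟩, ⟨l, hl⟩⟩, rfl⟩)

end Weights

/-! ### The spectrum of the expansion -/

theorem stmt9 {n m : ℕ} (G : Matrix (Fin n) (Fin n) Wl) (H : Matrix (Fin m) (Fin m) Wl)
    (S : Finset (Fin n)) (S' : Finset (Fin m))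
    (hG : IsStructuralSet G S) (hH : IsStructuralSet H S')
    -- every vertex of `G` belongs to a branch of `B_S(G)`
    (hcovG : ∀ v : Fin n, ∃ l, IsBranchOf G S l ∧ v ∈ l)
    -- `H` is an isospectral expansion `X_S(G)` of `G` with respect to `S`:
    -- the branch sets are isomorphic (under an identification `φ` of `S` with `S'`),
    (φ : {i // i ∈ S} ≃ {i // i ∈ S'})
    (hiso : ∀ i j : {x // x ∈ S},
      ∃ b : {l : List (Fin n) // IsBranch G S i.val j.val l} ≃
            {l : List (Fin m) // IsBranch H S' (φ i).val (φ j).val l},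
        ∀ β : {l : List (Fin n) // IsBranch G S i.val j.val l},
          weightSeq G β.val = weightSeq H (b β).val)
    -- the branches of `B_{S'}(H)` are pairwise independent,
    (hind : ∀ l₁ l₂ : List (Fin m), IsBranchOf H S' l₁ → IsBranchOf H S' l₂ → l₁ ≠ l₂ →
      ∀ v ∈ l₁.tail.dropLast, v ∉ l₂.tail.dropLast)
    -- and every vertex of `H` belongs to a branch of `B_{S'}(H)`.
    (hcovH : ∀ v : Fin m, ∃ l, IsBranchOf H S' l ∧ v ∈ l) :
    -- (a) `G` and `X_S(G)` have the same set of edge weights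
    ({w : Wl | w ≠ 0 ∧ ∃ i j, G i j = w} = {w : Wl | w ≠ 0 ∧ ∃ i j, H i j = w}) ∧
    -- (b) `det(M(X_S(G)) − λI) = det(M(G) − λI) · ∏_{v_i ∈ V−S} (ω(e_ii) − λ)^(n_i − 1)`
    charRat H = charRat G *
      ∏ i ∈ Sᶜ, (G i i - RatFunc.X) ^
        (Set.ncard {l : List (Fin n) | IsBranchOf G S l ∧ i ∈ l} - 1) := by
  classical
  choose b hb using hiso
  constructor
  · rw [edge_weights_eq hG hcovG, edge_weights_eq hH hcovH]
    ext w
    constructor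
    · rintro ⟨hw, i, j, β, hm⟩
      exact ⟨hw, φ i, φ j, b i j β, hb i j β ▸ hm⟩
    · rintro ⟨hw, i, j, β, hm⟩
      obtain ⟨i, rfl⟩ := φ.surjective i
      obtain ⟨j, rfl⟩ := φ.surjective j
      obtain ⟨β, rfl⟩ := (b i j).surjective β
      exact ⟨hw, i, j, β, (hb i j β).symm ▸ hm⟩
  · have : ∀ i j, Finite {l // IsBranch G S i j l} := finite_branch hG
    have : ∀ i j, Finite {l // IsBranch H S' i j l} := finite_branch hH
    have : Finite {l // IsBranchOf G S l} := (finite_branchOf hG).to_subtype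
    have : Finite {l // IsBranchOf H S' l} := (finite_branchOf hH).to_subtype
    let : ∀ i j, Fintype {l // IsBranch G S i j l} := fun _ _ => Fintype.ofFinite _
    let : ∀ i j, Fintype {l // IsBranch H S' i j l} := fun _ _ => Fintype.ofFinite _
    let : Fintype {l // IsBranchOf G S l} := Fintype.ofFinite _
    let : Fintype {l // IsBranchOf H S' l} := Fintype.ofFinite _
    -- the two isospectral reductions coincide
    have hred : charRat (Matrix.of fun i j : {i // i ∈ S} => pathSum G S i j) =
        charRat (Matrix.of fun i j : {i // i ∈ S'} => pathSum H S' i j) := by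
      rw [charRat, charRat, ← Matrix.det_submatrix_equiv_self φ]
      congr 1
      ext i j
      have e : pathSum G S i j = pathSum H S' (φ i) (φ j) := by
        rw [pathSum_eq_sum_branch hG i.2 j.2, pathSum_eq_sum_branch hH (φ i).2 (φ j).2]
        refine Fintype.sum_equiv (b i j) _ _ fun β => ?_
        rw [branchProd_eq_seqProd _ β.2.1, branchProd_eq_seqProd _ (b i j β).2.1, hb]
      simp [e, Matrix.diagonal_apply]
    -- so do the products of the loop factors over all branches
    have hloops : ∏ β : {l // IsBranchOf G S l}, seqLoops (weightSeq G β.1) =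
        ∏ β : {l // IsBranchOf H S' l}, seqLoops (weightSeq H β.1) := by
      refine Fintype.prod_equiv ((sigmaBranchEquiv G S).symm.trans
        ((Equiv.sigmaCongr (φ.prodCongr φ) fun p => b p.1 p.2).trans
          (sigmaBranchEquiv H S'))) _ _ fun β => ?_
      obtain ⟨⟨p, β⟩, rfl⟩ := (sigmaBranchEquiv G S).surjective β
      simp only [Equiv.trans_apply, Equiv.symm_apply_apply]
      exact congrArg seqLoops (hb p.1 p.2 β)
    rw [prod_branch_loops hG, prod_branch_loops hH] at hloops
    -- in `H` every vertex outside `S'` lies on exactly one branch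
    have hone : ∀ v ∈ S'ᶜ, Set.ncard {l | IsBranchOf H S' l ∧ v ∈ l} = 1 := by
      intro v hv
      have hv : v ∉ S' := by simpa using hv
      obtain ⟨l, hl, hvl⟩ := hcovH v
      rw [Set.ncard_eq_one]
      refine ⟨l, Set.eq_singleton_iff_unique_mem.2 ⟨⟨hl, hvl⟩, ?_⟩⟩
      rintro l' ⟨hl', hvl'⟩
      by_contra hne
      refine hind l' l hl' hl hne v ?_ ?_
      · obtain ⟨i, j, hl'⟩ := hl'
        exact (hl'.mem_interior hv).2 hvl'
      · obtain ⟨i, j, hl⟩ := hl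
        exact (hl.mem_interior hv).2 hvl
    have hH1 : ∏ v ∈ S'ᶜ, (H v v - RatFunc.X) ^ Set.ncard {l | IsBranchOf H S' l ∧ v ∈ l} =
        ∏ v ∈ S'ᶜ, (H v v - RatFunc.X) :=
      Finset.prod_congr rfl fun v hv => by rw [hone v hv, pow_one]
    rw [charRat_eq hH, charRat_eq hG, hred, mul_assoc, ← hH1, ← hloops, ← Finset.prod_mul_distrib]
    congr 1
    refine Finset.prod_congr rfl fun i _ => ?_
    -- the covering hypothesis gives `n_i ≥ 1`, so the truncated subtraction is genuine
    have hpos : 0 < Set.ncard {l | IsBranchOf G S l ∧ i ∈ l} := by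
      obtain ⟨l, hl, hil⟩ := hcovG i
      rw [Set.ncard_pos ((finite_branchOf hG).subset fun _ h => h.1)]
      exact ⟨l, hl, hil⟩
    rw [← pow_succ', Nat.sub_add_cancel hpos]
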